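/- Assume that for every i ∈ [6], every vertex v ∈ V_i, and all distinct j, k ∈ [6]∖{i}, there exist v_j ∈ V_j and v_k ∈ V_k with {v, v_j, v_k} ∈ E. Then in the hypercube-center graph G_S, dist_{G_S}(X_{x_1,x_2,x_3}, E_{v_i,v_j,v_k}) ≤ 2 for every left-half center X_{x_1,x_2,x_3} and every edge center E_{v_i,v_j,v_k}. -/

import Mathlib

open scoped Classical

/-- A vertex of the 6-partite 3-uniform hypergraph: a part `ℓ ∈ Fin 6` together with a
value in `[n]` (represented by `Fin n`). -/
abbrev HypVert (n : ℕ) := Fin 6 × Fin n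

/-- The value `v/(n+1)` associated to a vertex value `v ∈ [n]` (here `v : Fin n` represents
the value `v+1 ∈ [n]`). -/
noncomputable def hval (n : ℕ) (v : Fin n) : ℝ := ((v : ℕ) + 1) / ((n : ℝ) + 1)

/-- The set of parts met by a set of hypergraph vertices. -/
def hparts {n : ℕ} (e : Finset (HypVert n)) : Finset (Fin 6) := e.image Prod.fst

/-- The hyperedge set is well-formed: every hyperedge consists of `3` vertices lying in
three pairwise distinct parts. -/
def WellFormed {n : ℕ} (E : Set (Finset (HypVert n))) : Prop :=
  ∀ e ∈ E, e.card = 3 ∧ (hparts e).card = 3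

/-- The vertex triple `{(1, x₁), (2, x₂), (3, x₃)}` (parts `1,2,3`, `0`-based `0,1,2`). -/
def tripleL {n : ℕ} (x : Fin 3 → Fin n) : Finset (HypVert n) :=
  Finset.univ.image fun ℓ : Fin 3 => ((⟨(ℓ : ℕ), by have := ℓ.isLt; omega⟩ : Fin 6), x ℓ)

/-- The vertex triple `{(4, y₄), (5, y₅), (6, y₆)}` (parts `4,5,6`, `0`-based `3,4,5`). -/
def tripleR {n : ℕ} (y : Fin 3 → Fin n) : Finset (HypVert n) :=
  Finset.univ.image fun ℓ : Fin 3 => ((⟨(ℓ : ℕ) + 3, by have := ℓ.isLt; omega⟩ : Fin 6), y ℓ)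

/-- The left-half center `X x`: in the coordinate pair of part `ℓ ∈ {1,2,3}` it equals
`(x_ℓ/(n+1), 1 − x_ℓ/(n+1))`, and it equals `(2,2)` in the coordinate pairs of parts
`4,5,6`.  (The `12` coordinates are indexed by `Fin 6 × Fin 2`: a part and a position
within its coordinate pair.) -/
noncomputable def Xpt (n : ℕ) (x : Fin 3 → Fin n) : Fin 6 × Fin 2 → ℝ := fun p =>
  if h : (p.1 : ℕ) < 3 then
    (if p.2 = 0 then hval n (x ⟨(p.1 : ℕ), h⟩) else 1 - hval n (x ⟨(p.1 : ℕ), h⟩))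
  else 2

/-- The right-half center `Y y`: `(2,2)` in the coordinate pairs of parts `1,2,3` and
`(y_ℓ/(n+1), 1 − y_ℓ/(n+1))` in the coordinate pair of part `ℓ ∈ {4,5,6}`. -/
noncomputable def Ypt (n : ℕ) (y : Fin 3 → Fin n) : Fin 6 × Fin 2 → ℝ := fun p =>
  if h : 3 ≤ (p.1 : ℕ) then
    (if p.2 = 0 then hval n (y ⟨(p.1 : ℕ) - 3, by have := p.1.isLt; omega⟩)
     else 1 - hval n (y ⟨(p.1 : ℕ) - 3, by have := p.1.isLt; omega⟩))
  else 2

/-- The edge center of a hyperedge `e`: in the coordinate pair of a part `ℓ` met by `e`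
(with vertex value `v`) it equals `(1 + v/(n+1), 2 − v/(n+1))`, and it equals `(1,1)` in the
coordinate pairs of all other parts. -/
noncomputable def Ept (n : ℕ) (e : Finset (HypVert n)) : Fin 6 × Fin 2 → ℝ := fun p =>
  if (∃ v : Fin n, (p.1, v) ∈ e) then
    (if p.2 = 0 then 1 + ∑ v : Fin n, (if (p.1, v) ∈ e then hval n v else 0)
     else 2 - ∑ v : Fin n, (if (p.1, v) ∈ e then hval n v else 0))
  else 1

/-- Vertices of the hypercube-center graph `G_S`: left-half centers for non-hyperedge
triples from `V₁ × V₂ × V₃`, right-half centers for non-hyperedge triples from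
`V₄ × V₅ × V₆`, and edge centers for hyperedges whose parts lie neither all in `{1,2,3}`
nor all in `{4,5,6}`. -/
inductive GSVert (n : ℕ) (E : Set (Finset (HypVert n))) : Type where
  | left (x : Fin 3 → Fin n) (h : tripleL x ∉ E)
  | right (y : Fin 3 → Fin n) (h : tripleR y ∉ E)
  | edge (e : Finset (HypVert n)) (he : e ∈ E)
      (h1 : ¬ hparts e ⊆ ({0, 1, 2} : Finset (Fin 6)))
      (h2 : ¬ hparts e ⊆ ({3, 4, 5} : Finset (Fin 6)))

/-- The center in `ℝ^12` associated to each vertex of `G_S`. -/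
noncomputable def gsPos {n : ℕ} {E : Set (Finset (HypVert n))} :
    GSVert n E → (Fin 6 × Fin 2 → ℝ)
  | .left x _ => Xpt n x
  | .right y _ => Ypt n y
  | .edge e _ _ _ => Ept n e

/-- The hypercube-center graph `G_S`: two distinct centers are adjacent iff their
`ℓ∞`-distance is at most `1` (the distance on `Fin 6 × Fin 2 → ℝ` is the sup-metric), i.e.
iff the closed axis-parallel unit hypercubes around them intersect. -/
noncomputable def gsGraph (n : ℕ) (E : Set (Finset (HypVert n))) :
    SimpleGraph (GSVert n E) :=
  SimpleGraph.fromRel fun u v => dist (gsPos u) (gsPos v) ≤ 1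

theorem hval_mem_Icc {n : ℕ} (v : Fin n) : hval n v ∈ Set.Icc (0 : ℝ) 1 := by
  have hv : ((v : ℕ) : ℝ) ≤ n := by exact_mod_cast v.isLt.le
  refine ⟨by unfold hval; positivity, ?_⟩
  unfold hval
  rw [div_le_one (by positivity)]
  linarith

theorem WellFormed.injOn_fst {n : ℕ} {E : Set (Finset (HypVert n))} (hE : WellFormed E)
    {e : Finset (HypVert n)} (he : e ∈ E) : Set.InjOn Prod.fst (e : Set (HypVert n)) :=
  Finset.card_image_iff.mp ((hE e he).2.trans (hE e he).1.symm)

theorem Ept_of_mem {n : ℕ} {e : Finset (HypVert n)}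
    (hinj : Set.InjOn Prod.fst (e : Set (HypVert n))) {ℓ : Fin 6} {v : Fin n}
    (hv : (ℓ, v) ∈ e) (i : Fin 2) :
    Ept n e (ℓ, i) = if i = 0 then 1 + hval n v else 2 - hval n v := by
  have huniq : ∀ u : Fin n, (ℓ, u) ∈ e ↔ u = v := fun u =>
    ⟨fun hu => congrArg Prod.snd (hinj hu hv rfl), fun h => h ▸ hv⟩
  simp [Ept, huniq]

theorem Ept_of_forall_notMem {n : ℕ} {e : Finset (HypVert n)} {ℓ : Fin 6}
    (h : ∀ v : Fin n, (ℓ, v) ∉ e) (i : Fin 2) : Ept n e (ℓ, i) = 1 := by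
  simp [Ept, h]

theorem Ept_mem_Icc {n : ℕ} {e : Finset (HypVert n)}
    (hinj : Set.InjOn Prod.fst (e : Set (HypVert n))) (p : Fin 6 × Fin 2) :
    Ept n e p ∈ Set.Icc (1 : ℝ) 2 := by
  obtain ⟨ℓ, i⟩ := p
  by_cases h : ∃ v : Fin n, (ℓ, v) ∈ e
  · obtain ⟨v, hv⟩ := h
    rw [Ept_of_mem hinj hv]
    have := hval_mem_Icc v
    split_ifs <;> constructor <;> linarith [this.1, this.2]
  · rw [Ept_of_forall_notMem (not_exists.mp h)]
    norm_num

/-- Any two edge centers are at `ℓ∞`-distance at most `1`. -/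
theorem dist_Ept_Ept_le_one {n : ℕ} {e f : Finset (HypVert n)}
    (he : Set.InjOn Prod.fst (e : Set (HypVert n)))
    (hf : Set.InjOn Prod.fst (f : Set (HypVert n))) : dist (Ept n e) (Ept n f) ≤ 1 := by
  refine (dist_pi_le_iff zero_le_one).mpr fun p => ?_
  exact (Real.dist_le_of_mem_Icc (Ept_mem_Icc he p) (Ept_mem_Icc hf p)).trans_eq (by norm_num)

/-- A left-half center is at `ℓ∞`-distance at most `1` from the center of every hyperedge that
agrees with it in the parts `1, 2, 3`. -/
theorem dist_Xpt_Ept_le_one {n : ℕ} {x : Fin 3 → Fin n} {e : Finset (HypVert n)}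
    (he : Set.InjOn Prod.fst (e : Set (HypVert n)))
    (hagree : ∀ (ℓ : Fin 6) (h : (ℓ : ℕ) < 3) (v : Fin n), (ℓ, v) ∈ e → v = x ⟨ℓ, h⟩) :
    dist (Xpt n x) (Ept n e) ≤ 1 := by
  refine (dist_pi_le_iff zero_le_one).mpr ?_
  rintro ⟨ℓ, i⟩
  rw [Real.dist_eq, abs_le]
  by_cases hℓ : (ℓ : ℕ) < 3
  · have hx := hval_mem_Icc (x ⟨ℓ, hℓ⟩)
    by_cases h : ∃ v : Fin n, (ℓ, v) ∈ e
    · obtain ⟨v, hv⟩ := h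
      rw [Ept_of_mem he hv, hagree ℓ hℓ v hv]
      simp only [Xpt, hℓ, dite_true]
      split_ifs <;> constructor <;> linarith [hx.1, hx.2]
    · rw [Ept_of_forall_notMem (not_exists.mp h)]
      simp only [Xpt, hℓ, dite_true]
      split_ifs <;> constructor <;> linarith [hx.1, hx.2]
  · have := Ept_mem_Icc he (ℓ, i)
    simp only [Xpt, hℓ, dite_false]
    constructor <;> linarith [this.1, this.2]

theorem gsGraph_edist_le_one {n : ℕ} {E : Set (Finset (HypVert n))} {u v : GSVert n E}
    (h : dist (gsPos u) (gsPos v) ≤ 1) : (gsGraph n E).edist u v ≤ 1 := by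
  rw [SimpleGraph.edist_le_one_iff_adj_or_eq]
  by_cases huv : u = v
  · exact .inr huv
  · exact .inl ((SimpleGraph.fromRel_adj _ _ _).mpr ⟨huv, .inl h⟩)

/-- If every vertex `w` extends to a hyperedge through any two other
prescribed distinct parts, then in `G_S` every left-half center is within distance `2` of
every edge center. -/
theorem gsGraph_edge_distance (n : ℕ) (hn : 1 ≤ n) (E : Set (Finset (HypVert n)))
    (hE : WellFormed E)
    (htech : ∀ (w : HypVert n) (j k : Fin 6), j ≠ k → j ≠ w.1 → k ≠ w.1 →
      ∃ vj vk : Fin n, ({w, (j, vj), (k, vk)} : Finset (HypVert n)) ∈ E)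
    (x : Fin 3 → Fin n) (hx : tripleL x ∉ E)
    (e : Finset (HypVert n)) (he : e ∈ E)
    (h1 : ¬ hparts e ⊆ ({0, 1, 2} : Finset (Fin 6)))
    (h2 : ¬ hparts e ⊆ ({3, 4, 5} : Finset (Fin 6))) :
    (gsGraph n E).edist (GSVert.left x hx) (GSVert.edge e he h1 h2) ≤ 2 := by
  obtain ⟨a, b, hf⟩ := htech (0, x 0) 3 4 (by decide) (by simp) (by simp)
  set f : Finset (HypVert n) := {(0, x 0), (3, a), (4, b)} with hf_def
  have hf1 : ¬ hparts f ⊆ ({0, 1, 2} : Finset (Fin 6)) := fun h => by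
    have : (3 : Fin 6) ∈ hparts f := by simp [hparts, hf_def]
    exact absurd (h this) (by decide)
  have hf2 : ¬ hparts f ⊆ ({3, 4, 5} : Finset (Fin 6)) := fun h => by
    have : (0 : Fin 6) ∈ hparts f := by simp [hparts, hf_def]
    exact absurd (h this) (by decide)
  have hagree : ∀ (ℓ : Fin 6) (h : (ℓ : ℕ) < 3) (v : Fin n), (ℓ, v) ∈ f → v = x ⟨ℓ, h⟩ := by
    intro ℓ h v hv
    simp only [hf_def, Finset.mem_insert, Finset.mem_singleton, Prod.mk.injEq] at hv
    obtain ⟨rfl, rfl⟩ | ⟨rfl, -⟩ | ⟨rfl, -⟩ := hv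
    · rfl
    · exact absurd h (by decide)
    · exact absurd h (by decide)
  calc (gsGraph n E).edist (GSVert.left x hx) (GSVert.edge e he h1 h2)
      ≤ (gsGraph n E).edist (GSVert.left x hx) (GSVert.edge f hf hf1 hf2)
        + (gsGraph n E).edist (GSVert.edge f hf hf1 hf2) (GSVert.edge e he h1 h2) :=
        SimpleGraph.edist_triangle
    _ ≤ 1 + 1 := add_le_add
        (gsGraph_edist_le_one (dist_Xpt_Ept_le_one (hE.injOn_fst hf) hagree))
        (gsGraph_edist_le_one (dist_Ept_Ept_le_one (hE.injOn_fst hf) (hE.injOn_fst he)))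
    _ = 2 := one_add_one_eq_two
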